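/- arXiv:2605.14955 — 3 statements merged into one kernel-verified Lean document; each statement's English description precedes it below -/
import Mathlib

section
/- Let w be a finite word and u a primitive word with ℓ = |u| such that u² is a factor of w, and let M = M(u) be the number of integers q ≥ ℓ for which the small-circuit condition SC_w(u,q) holds. Then for every integer i ≥ M, QClass_w(u) ∩ [u]_{2ℓ+i} = ∅; that is, no length-(2ℓ+i) factor of u^ω is a factor of w that is a rational power of exponent ≥ 2 of a conjugate of u. -/
/-!
Write `ℓ = |u|`. A factor `v` of `u^ω` of length `2ℓ + i` has period `ℓ`, so the factors of length
`q` starting at its first `ℓ` positions represent every residue class of starting positions in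
`u^ω`; they all fit inside `v` as soon as `q ≤ ℓ + i + 1` (`perFac_infix`). Hence if such a `v`
occurs in `w`, the small-circuit condition holds for all `i + 1` integers `q` in `[ℓ, ℓ + i]`.
Only finitely many `q` satisfy the condition, because `[u]_q` is never empty (`finite_SC`), so
`M(u) ≥ i + 1`.
-/

/-- `wpow u k` is the concatenation of `k` copies of the word `u`. -/
def wpow {α : Type*} (u : List α) : ℕ → List α
  | 0 => []
  | n + 1 => u ++ wpow u n

/-- A nonempty word is primitive if it is not a `k`-th power, `k ≥ 2`, of any word. -/
def Primitive {α : Type*} (u : List α) : Prop :=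
  u ≠ [] ∧ ∀ (v : List α) (k : ℕ), 2 ≤ k → u ≠ wpow v k

/-- `v` is a rational power of exponent at least 2 of the nonempty word `p`:
`v = p^k p'` with `k ≥ 2` an integer and `p'` a (possibly empty) proper prefix of `p`. -/
def IsRatPow {α : Type*} (p v : List α) : Prop :=
  p ≠ [] ∧ ∃ (k : ℕ) (p' : List α), 2 ≤ k ∧ p' <+: p ∧ p' ≠ p ∧ v = wpow p k ++ p'

/-- Two words are conjugate. -/
def Conj {α : Type*} (u v : List α) : Prop :=
  ∃ x y, u = x ++ y ∧ v = y ++ x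

/-- The set of factors of a word. -/
def Fac {α : Type*} (w : List α) : Set (List α) := {v | v <:+: w}

/-- `PerFac u i` is the set `[u]_i` of length-`i` factors of the infinite periodic
word `u^ω` (equivalently, of `u^(i+1)` when `u` is nonempty). -/
def PerFac {α : Type*} (u : List α) (i : ℕ) : Set (List α) :=
  {v | v.length = i ∧ v <:+: wpow u (i + 1)}

/-- The small-circuit condition `SC_w(u,q)`: `q ≥ |u|`, `[u]_q ⊆ Fac(w)` and
`[u]_{q+1} ⊆ Fac(w)`. -/
def SC {α : Type*} (w u : List α) (q : ℕ) : Prop :=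
  u.length ≤ q ∧ PerFac u q ⊆ Fac w ∧ PerFac u (q + 1) ⊆ Fac w

/-- `M(u)`: the number of integers `q` for which `SC_w(u,q)` holds. -/
noncomputable def Mnum {α : Type*} (w u : List α) : ℕ :=
  Set.ncard {q : ℕ | SC w u q}

/-- `QClass_w(u)`: the set of factors of `w` that are rational powers of exponent
at least 2 of some conjugate of `u`. -/
def QClass {α : Type*} (w u : List α) : Set (List α) :=
  {v | v <:+: w ∧ ∃ p, Conj u p ∧ IsRatPow p v}

/-- `RP(w)`: the number of distinct factors of `w` that are rational powers of
exponent at least 2 of some nonempty word. -/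
noncomputable def RP {α : Type*} (w : List α) : ℕ :=
  Set.ncard {v | v <:+: w ∧ ∃ p, IsRatPow p v}

theorem length_wpow {α : Type*} (u : List α) (k : ℕ) :
    (wpow u k).length = k * u.length := by
  induction k with
  | zero => simp [wpow]
  | succ k ih => simp only [wpow, List.length_append, ih]; ring

theorem getElem?_wpow {α : Type*} (u : List α) (k j : ℕ) (hj : j < k * u.length) :
    (wpow u k)[j]? = u[j % u.length]? := by
  induction k generalizing j with
  | zero => simp at hj
  | succ k ih =>
    rw [wpow]
    by_cases h : j < u.length
    · rw [List.getElem?_append_left h, Nat.mod_eq_of_lt h]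
    · have h' : u.length ≤ j := Nat.le_of_not_lt h
      rw [List.getElem?_append_right h', ih (j - u.length) (by rw [Nat.succ_mul] at hj; omega),
        ← Nat.mod_eq_sub_mod h']

/-- A factor of `u^ω` is read off `u` cyclically from some starting position `a`. -/
theorem exists_offset_of_mem_perFac {α : Type*} {u v : List α} {n : ℕ} (hv : v ∈ PerFac u n) :
    v.length = n ∧ ∃ a, ∀ j, j < n → v[j]? = u[(a + j) % u.length]? := by
  obtain ⟨hl, s, t, hst⟩ := hv
  refine ⟨hl, s.length, fun j hj => ?_⟩
  have hlen := congrArg List.length hst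
  rw [length_wpow] at hlen
  simp only [List.length_append] at hlen
  rw [← getElem?_wpow u (n + 1) _ (by omega), ← hst, List.append_assoc,
    List.getElem?_append_right (by omega), Nat.add_sub_cancel_left,
    List.getElem?_append_left (by omega)]

/-- A factor of `u^ω` of length `2|u| + i` contains every factor of `u^ω` of length at most
`|u| + i + 1`. -/
theorem perFac_infix {α : Type*} {u v x : List α} (hu : u ≠ []) {i q : ℕ}
    (hv : v ∈ PerFac u (2 * u.length + i)) (hx : x ∈ PerFac u q) (hq : q ≤ u.length + i + 1) :
    x <:+: v := by
  obtain ⟨hvl, a, ha⟩ := exists_offset_of_mem_perFac hv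
  obtain ⟨hxl, b, hb⟩ := exists_offset_of_mem_perFac hx
  have hpos : 0 < u.length := List.length_pos_iff.mpr hu
  obtain ⟨r, hr, hmod⟩ : ∃ r, r < u.length ∧ (a + r) ≡ b [MOD u.length] := by
    refine ⟨(b + (u.length - a % u.length)) % u.length, Nat.mod_lt _ hpos, ?_⟩
    have hlt := Nat.mod_lt a hpos
    calc a + (b + (u.length - a % u.length)) % u.length
        ≡ a % u.length + (b + (u.length - a % u.length)) [MOD u.length] :=
          (Nat.mod_modEq _ _).symm.add (Nat.mod_modEq _ _)
      _ = b + u.length := by omega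
      _ ≡ b [MOD u.length] := by simp [Nat.ModEq]
  have key : x = (v.drop r).take q := by
    apply List.ext_getElem?
    intro j
    by_cases hj : j < q
    · rw [List.getElem?_take_of_lt hj, List.getElem?_drop, hb j hj, ha (r + j) (by omega),
        ← Nat.add_assoc, (hmod.add_right j : (a + r + j) % u.length = (b + j) % u.length)]
    · rw [List.getElem?_eq_none (by omega),
        List.getElem?_eq_none (by rw [List.length_take]; omega)]
  rw [key]
  exact (List.take_prefix _ _).isInfix.trans (List.drop_suffix _ _).isInfix

theorem finite_SC {α : Type*} (w : List α) {u : List α} (hu : u ≠ []) :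
    {q : ℕ | SC w u q}.Finite := by
  refine (Set.finite_Iic w.length).subset fun q hq => ?_
  have hpos : 0 < u.length := List.length_pos_iff.mpr hu
  have hlen : ((wpow u (q + 1)).take q).length = q := by
    rw [List.length_take, length_wpow]
    exact Nat.min_eq_left (by nlinarith)
  have h : (wpow u (q + 1)).take q <:+: w :=
    hq.2.1 ⟨hlen, (List.take_prefix _ _).isInfix⟩
  exact hlen ▸ h.length_le

/-- For every integer `i ≥ M(u)`, `QClass_w(u) ∩ [u]_{2ℓ+i} = ∅`. -/
theorem stmt_2 {α : Type*} (w u : List α) (hu : Primitive u)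
    (hsq : (u ++ u) <:+: w) :
    ∀ i : ℕ, Mnum w u ≤ i →
      QClass w u ∩ PerFac u (2 * u.length + i) = ∅ := by
  intro i hi
  rw [Set.eq_empty_iff_forall_notMem]
  rintro v ⟨⟨hvw, -⟩, hv⟩
  have hsub : (↑(Finset.Icc u.length (u.length + i)) : Set ℕ) ⊆ {q | SC w u q} := by
    intro q hq
    rw [Finset.mem_coe, Finset.mem_Icc] at hq
    exact ⟨hq.1, fun x hx => (perFac_infix hu.1 hv hx (by omega)).trans hvw,
      fun x hx => (perFac_infix hu.1 hv hx (by omega)).trans hvw⟩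
  have hcard := Set.ncard_le_ncard hsub (finite_SC w hu.1)
  rw [Set.ncard_coe_finset, Nat.card_Icc] at hcard
  unfold Mnum at hi
  omega
end

section
/- Let w be a finite word of length n and let 1 ≤ q ≤ n. Let sc_q(w) denote the number of conjugacy classes of primitive words u with |u| ≤ q for which the small-circuit condition SC_w(u,q) holds. Then sc_q(w) ≤ |Fac_{q+1}(w)| − |Fac_q(w)| + 1. -/
/-! ### Periodic words -/

/-- The prefix of length `k` of the infinite periodic word `v^ω` (for nonempty `v`). -/
def per {α : Type*} (v : List α) (k : ℕ) : List α := (wpow v k).take k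

theorem wpow_add {α : Type*} (u : List α) (m n : ℕ) :
    wpow u (m + n) = wpow u m ++ wpow u n := by
  induction m with
  | zero => simp [wpow]
  | succ m ih => rw [Nat.add_right_comm]; simp [wpow, ih]

theorem wpow_length {α : Type*} (u : List α) (m : ℕ) :
    (wpow u m).length = m * u.length := by
  induction m with
  | zero => simp [wpow]
  | succ m ih => simp [wpow, ih]; ring

theorem le_wpow_length {α : Type*} {u : List α} (hu : u ≠ []) (m : ℕ) :
    m ≤ (wpow u m).length := by
  rw [wpow_length]
  exact Nat.le_mul_of_pos_right _ (List.length_pos_iff.2 hu)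

theorem wpow_shift {α : Type*} (x y : List α) (k : ℕ) :
    x ++ wpow (y ++ x) k = wpow (x ++ y) k ++ x := by
  induction k with
  | zero => simp [wpow]
  | succ k ih => simp only [wpow, List.append_assoc, ← ih]

theorem per_length {α : Type*} {v : List α} (hv : v ≠ []) (k : ℕ) :
    (per v k).length = k := by
  simp [per, le_wpow_length hv k]

theorem take_per {α : Type*} {v : List α} (hv : v ≠ []) {j k : ℕ} (h : j ≤ k) :
    (per v k).take j = per v j := by
  obtain ⟨d, rfl⟩ := Nat.exists_eq_add_of_le h
  rw [per, per, List.take_take, wpow_add, min_eq_left h,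
    List.take_append_of_le_length (le_wpow_length hv j)]

theorem per_self {α : Type*} {v : List α} (hv : v ≠ []) : per v v.length = v := by
  obtain ⟨a, t, rfl⟩ := List.exists_cons_of_ne_nil hv
  rw [per, List.length_cons, wpow, List.take_append_of_le_length (by simp)]
  simp

theorem per_eq_append {α : Type*} {v : List α} (hv : v ≠ []) {k : ℕ} (h : v.length ≤ k) :
    per v k = v ++ per v (k - v.length) := by
  have hp := List.length_pos_iff.2 hv
  obtain ⟨m, rfl⟩ : ∃ m, k = m + 1 := ⟨k - 1, by omega⟩
  rw [per, wpow, List.take_append, List.take_of_length_le h]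
  congr 1
  have := take_per hv (j := m + 1 - v.length) (k := m) (by omega)
  rw [← this, per, List.take_take, min_eq_left (by omega)]

theorem per_tail {α : Type*} {v : List α} (hv : v ≠ []) (q : ℕ) :
    (per v (q + 1)).drop 1 = per (v.rotate 1) q := by
  obtain ⟨a, t, rfl⟩ := List.exists_cons_of_ne_nil hv
  have h := wpow_shift t [a] q
  simp only [List.singleton_append] at h
  simp only [per, wpow, List.cons_append, List.take_succ_cons, List.drop_succ_cons,
    List.drop_zero, List.rotate_cons_succ, List.rotate_zero]
  rw [h, List.take_append_of_le_length (le_wpow_length (by simp) q)]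

/-! ### Conjugacy and primitivity -/

theorem conj_iff {α : Type*} (u v : List α) : Conj u v ↔ u ~r v := by
  constructor
  · rintro ⟨x, y, rfl, rfl⟩
    exact List.isRotated_append
  · intro h
    obtain ⟨n, hn, rfl⟩ := List.isRotated_iff_mod.1 h
    exact ⟨u.take n, u.drop n, by simp, List.rotate_eq_drop_append_take hn⟩

theorem per_mem_PerFac {α : Type*} {u v : List α} (h : u ~r v) (hv : v ≠ []) (k : ℕ) :
    per v k ∈ PerFac u k := by
  refine ⟨per_length hv k, ?_⟩
  obtain ⟨x, y, rfl, rfl⟩ := (conj_iff u v).2 h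
  refine (List.take_prefix _ _).isInfix.trans ⟨x, y, ?_⟩
  rw [wpow_shift, wpow_add]
  simp [wpow]

theorem wpow_rotate_one {α : Type*} (v : List α) (k : ℕ) :
    (wpow v k).rotate 1 = wpow (v.rotate 1) k := by
  cases v with
  | nil =>
    have h0 : wpow ([] : List α) k = [] := List.length_eq_zero_iff.1 (by simp [wpow_length])
    simp [h0]
  | cons a t =>
    cases k with
    | zero => simp [wpow]
    | succ k =>
      have h := wpow_shift [a] t (k + 1)
      simp only [wpow, List.cons_append, List.cons.injEq, true_and] at h
      simp only [wpow, List.cons_append, List.rotate_cons_succ, List.rotate_zero]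
      exact h.symm

theorem wpow_rotate {α : Type*} (v : List α) (k i : ℕ) :
    (wpow v k).rotate i = wpow (v.rotate i) k := by
  induction i with
  | zero => simp
  | succ i ih => rw [← List.rotate_rotate, ih, wpow_rotate_one, List.rotate_rotate]

theorem Primitive.of_isRotated {α : Type*} {u v : List α} (hu : Primitive u) (h : u ~r v) :
    Primitive v := by
  obtain ⟨i, hi⟩ := h.symm
  refine ⟨fun h0 => hu.1 (by simpa [h0] using hi.symm), fun z k hk hz => ?_⟩
  exact hu.2 (z.rotate i) k hk (by rw [← hi, hz, wpow_rotate])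

/-- Two commuting words are powers of a common word. -/
theorem commute_wpow {α : Type*} (N : ℕ) : ∀ x y : List α, x.length + y.length ≤ N →
    x ++ y = y ++ x → ∃ z i j, x = wpow z i ∧ y = wpow z j := by
  induction N with
  | zero =>
    intro x y h _
    exact ⟨[], 0, 0, List.length_eq_zero_iff.1 (by omega), List.length_eq_zero_iff.1 (by omega)⟩
  | succ N ih =>
    have key : ∀ x y : List α, x.length ≤ y.length → x.length + y.length ≤ N + 1 →
        x ++ y = y ++ x → ∃ z i j, x = wpow z i ∧ y = wpow z j := by
      intro x y hle hN h
      by_cases hx : x = []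
      · exact ⟨y, 0, 1, by simp [hx, wpow], by simp [wpow]⟩
      have hp := List.length_pos_iff.2 hx
      obtain ⟨t, rfl⟩ : x <+: y :=
        List.prefix_of_prefix_length_le ⟨y, rfl⟩ ⟨x, h.symm⟩ hle
      simp only [List.append_assoc, List.append_cancel_left_eq] at h
      obtain ⟨z, i, j, h1, h2⟩ := ih x t (by simp at hN; omega) h
      exact ⟨z, i, i + j, h1, by rw [wpow_add, ← h1, ← h2]⟩
    intro x y hN h
    rcases le_total x.length y.length with hle | hle
    · exact key x y hle hN h
    · obtain ⟨z, i, j, h1, h2⟩ := key y x hle (by omega) h.symm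
      exact ⟨z, j, i, h2, h1⟩

theorem not_primitive_of_commute {α : Type*} {x y : List α} (hx : x ≠ []) (hy : y ≠ [])
    (h : x ++ y = y ++ x) : ¬ Primitive (x ++ y) := by
  intro hp
  obtain ⟨z, i, j, h1, h2⟩ := commute_wpow _ x y le_rfl h
  have hi : i ≠ 0 := by rintro rfl; exact hx h1
  have hj : j ≠ 0 := by rintro rfl; exact hy h2
  exact hp.2 z (i + j) (by omega) (by rw [wpow_add, ← h1, ← h2])

/-! ### Unbordered conjugates -/

/-- A word is unbordered if no proper nonempty prefix of it is also a suffix. -/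
def Unbordered {α : Type*} (l : List α) : Prop :=
  ∀ b s t : List α, l = b ++ s → l = t ++ b → b = [] ∨ s = []

theorem append_lt_left {α : Type*} [LinearOrder α] (b : List α) {s t : List α} (h : s < t) :
    b ++ s < b ++ t := by
  induction b with
  | nil => exact h
  | cons a b ih => exact List.cons_lt_cons_iff.2 (Or.inr ⟨rfl, ih⟩)

theorem append_lt_right {α : Type*} [LinearOrder α] (b : List α) : ∀ {s t : List α},
    s.length = t.length → s < t → s ++ b < t ++ b
  | [], [], _, h => absurd h (lt_irrefl _)
  | a :: s, c :: t, hl, h => by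
    rcases List.cons_lt_cons_iff.1 h with h | ⟨h, h'⟩
    · exact List.cons_lt_cons_iff.2 (Or.inl h)
    · exact List.cons_lt_cons_iff.2 (Or.inr ⟨h, append_lt_right b (by simpa using hl) h'⟩)

/-- Every primitive word has an unbordered conjugate, namely its Lyndon conjugate: the least one
for the lexicographic order induced by an arbitrary linear order on the alphabet. -/
theorem exists_unbordered {α : Type*} {u : List α} (hu : Primitive u) :
    ∃ l, u ~r l ∧ Unbordered l := by
  classical
  let _ : LinearOrder α := linearOrderOfSTO WellOrderingRel
  obtain ⟨l, hl, hmin⟩ := Finset.exists_min_image u.cyclicPermutations.toFinset id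
    ⟨u, by simpa using List.IsRotated.refl u⟩
  simp only [List.mem_toFinset, List.mem_cyclicPermutations_iff, id] at hl hmin
  refine ⟨l, hl.symm, fun b s t h1 h2 => ?_⟩
  by_contra! hne
  have hlen : s.length = t.length := by
    have := congrArg List.length (h1.symm.trans h2)
    simp at this; omega
  rcases lt_trichotomy s t with h | h | h
  · have h3 := append_lt_right b hlen h
    rw [← h2] at h3
    refine absurd (hmin (s ++ b) ?_) (not_le.2 h3)
    exact List.IsRotated.trans List.isRotated_append (h1 ▸ hl)
  · subst h
    exact not_primitive_of_commute hne.1 hne.2 (h1.symm.trans h2)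
      (h1 ▸ hu.of_isRotated hl.symm)
  · have h3 := append_lt_left b h
    rw [← h1] at h3
    refine absurd (hmin (b ++ t) ?_) (not_le.2 h3)
    exact List.IsRotated.trans List.isRotated_append (h2 ▸ hl)

/-- An unbordered word `l` has no period smaller than its length, so for `k ≥ |l|` the words `l^ω`
and `v^ω` can share their prefix of length `k` only if `l` is at most as long as `v`. -/
theorem Unbordered.le_length {α : Type*} {l v : List α} (hl : Unbordered l) (hl0 : l ≠ [])
    (hv : v ≠ []) {k : ℕ} (hk : l.length ≤ k) (h : per l k = per v k) :
    l.length ≤ v.length := by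
  by_contra! hlt
  have h1 : l = per v l.length := by
    rw [← take_per hv hk, ← h, take_per hl0 hk, per_self hl0]
  have h2 := per_eq_append hv hlt.le
  have h3 : l = per v (l.length - v.length) ++ l.drop (l.length - v.length) := by
    conv_lhs => rw [← List.take_append_drop (l.length - v.length) l]
    congr 1
    exact (congrArg (List.take (l.length - v.length)) h1).trans (take_per hv (by omega))
  have hp := List.length_pos_iff.2 hv
  rcases hl _ _ _ h3 (h1.trans h2) with h | h
  · have := congrArg List.length h
    rw [per_length hv] at this
    simp at this; omega
  · have := congrArg List.length h
    simp at this; omega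

theorem eq_of_per_eq {α : Type*} {l v : List α} (hl0 : l ≠ []) (hv : v ≠ []) {k : ℕ}
    (hk : l.length ≤ k) (hlen : l.length = v.length) (h : per l k = per v k) : l = v := by
  rw [← per_self hl0, ← take_per hl0 hk, h, hlen, take_per hv (hlen ▸ hk), per_self hv]

theorem Unbordered.rotate_ne {α : Type*} {l : List α} (hl : Unbordered l) {i : ℕ}
    (hi : 0 < i) (hil : i < l.length) : l.rotate i ≠ l := by
  intro h
  rw [List.rotate_eq_drop_append_take hil.le] at h
  rcases hl (l.take i) (l.drop i) (l.drop i) (by simp) h.symm with h | h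
  · have := congrArg List.length h
    rw [List.length_take, List.length_nil] at this; omega
  · have := congrArg List.length h
    rw [List.length_drop, List.length_nil] at this; omega

/-! ### Counting edges of a connected graph -/

/-- A finite connected multigraph with vertex set `S` and edge set `E` has at most `|E| + 1`
vertices. Connectedness is expressed by saying that every equivalence relation that relates the
endpoints of each edge relates all vertices. -/
theorem ncard_le_of_connected {V ε : Type*} (S : Set V) (E : Set ε) (hS : S.Finite)
    (hE : E.Finite) (hne : S.Nonempty) (s t : ε → V) (hst : ∀ e ∈ E, s e ∈ S ∧ t e ∈ S)
    (h : ∀ r : V → V → Prop, Equivalence r → (∀ e ∈ E, r (s e) (t e)) →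
      ∀ a ∈ S, ∀ b ∈ S, r a b) : S.ncard ≤ E.ncard + 1 := by
  classical
  let G : SimpleGraph S :=
    SimpleGraph.fromRel (fun a b : S => ∃ e ∈ E, s e = a ∧ t e = b)
  let r : V → V → Prop := fun a b => a = b ∨ ∃ (ha : a ∈ S) (hb : b ∈ S),
    G.Reachable ⟨a, ha⟩ ⟨b, hb⟩
  have hr : Equivalence r := by
    refine ⟨fun a => Or.inl rfl, ?_, ?_⟩
    · rintro a b (h | ⟨ha, hb, h⟩)
      · exact Or.inl h.symm
      · exact Or.inr ⟨hb, ha, h.symm⟩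
    · rintro a b c (rfl | ⟨ha, hb, h⟩) h2
      · exact h2
      · rcases h2 with rfl | ⟨hb', hc, h2⟩
        · exact Or.inr ⟨ha, hb, h⟩
        · exact Or.inr ⟨ha, hc, h.trans h2⟩
  have hconn : G.Connected := by
    have : Nonempty S := hne.to_subtype
    refine ⟨fun a b => ?_⟩
    have hedge : ∀ e ∈ E, r (s e) (t e) := by
      intro e he
      by_cases heq : s e = t e
      · exact Or.inl heq
      · refine Or.inr ⟨(hst e he).1, (hst e he).2, SimpleGraph.Adj.reachable ?_⟩
        exact (SimpleGraph.fromRel_adj _ _ _).2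
          ⟨fun h => heq (congrArg Subtype.val h), Or.inl ⟨e, he, rfl, rfl⟩⟩
    rcases h r hr hedge a a.2 b b.2 with h | ⟨_, _, h⟩
    · rw [Subtype.ext h]
    · exact h
  have : Finite S := hS
  have h1 := hconn.card_vert_le_card_edgeSet_add_one
  have h2 : G.edgeSet.ncard ≤ E.ncard := by
    have hsub : (Sym2.map Subtype.val) '' G.edgeSet ⊆ (fun e => s(s e, t e)) '' E := by
      rintro _ ⟨x, hx, rfl⟩
      induction x with
      | h a b =>
        rcases ((SimpleGraph.fromRel_adj _ _ _).1 (G.mem_edgeSet.1 hx)).2 with ⟨e, he, h1, h2⟩ | ⟨e, he, h1, h2⟩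
        · exact ⟨e, he, by simp [h1, h2]⟩
        · exact ⟨e, he, by simp [h1, h2]⟩
    rw [← Set.ncard_image_of_injective _ (Sym2.map.injective Subtype.val_injective)]
    exact (Set.ncard_le_ncard hsub (hE.image _)).trans (Set.ncard_image_le hE)
  rw [Nat.card_coe_set_eq, Nat.card_coe_set_eq] at h1
  omega

/-! ### The graph of factors -/

theorem finite_factors {α : Type*} (w : List α) (k : ℕ) :
    {v : List α | v.length = k ∧ v <:+: w}.Finite :=
  (List.finite_toSet w.sublists).subset fun _ hv => List.mem_sublists.2 hv.2.sublist

/-- The number `sc_q(w)` of conjugacy classes of primitive words `u` with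
`|u| ≤ q` satisfying `SC_w(u,q)` is at most `|Fac_{q+1}(w)| - |Fac_q(w)| + 1`. -/
theorem stmt_5 {α : Type*} (w : List α) (n q : ℕ)
    (hn : w.length = n) (hq1 : 1 ≤ q) (hqn : q ≤ n) :
    (Set.ncard {c : Set (List α) |
        ∃ u : List α, Primitive u ∧ SC w u q ∧ c = {v | Conj u v}} : ℤ) ≤
      (Set.ncard {v : List α | v.length = q + 1 ∧ v <:+: w} : ℤ) -
        (Set.ncard {v : List α | v.length = q ∧ v <:+: w} : ℤ) + 1 := by
  classical
  set C : Set (Set (List α)) :=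
    {c | ∃ u : List α, Primitive u ∧ SC w u q ∧ c = {v | Conj u v}} with hC
  set E : Set (List α) := {v | v.length = q + 1 ∧ v <:+: w} with hE
  set S : Set (List α) := {v | v.length = q ∧ v <:+: w} with hS
  have hEfin : E.Finite := finite_factors w (q + 1)
  have hSfin : S.Finite := finite_factors w q
  have hex : ∀ c : Set (List α), ∃ l : List α, c ∈ C → Unbordered l ∧ l ≠ [] ∧
      l.length ≤ q ∧ (∀ v, l ~r v → per v (q + 1) ∈ E) ∧ c = {v | l ~r v} := by
    intro c
    by_cases hc : c ∈ C
    swap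
    · exact ⟨[], fun h => absurd h hc⟩
    obtain ⟨u, hu, hsc, rfl⟩ := hc
    obtain ⟨l, hul, hl⟩ := exists_unbordered hu
    refine ⟨l, fun _ => ⟨hl, (hu.of_isRotated hul).1, hul.perm.length_eq ▸ hsc.1,
      fun v hv => ?_, ?_⟩⟩
    · have hv0 : v ≠ [] := (hu.of_isRotated (hul.trans hv)).1
      exact ⟨per_length hv0 _, hsc.2.2 (per_mem_PerFac (hul.trans hv) hv0 _)⟩
    · ext v
      rw [Set.mem_ofPred_eq, Set.mem_ofPred_eq, conj_iff]
      exact ⟨fun h => hul.symm.trans h, fun h => hul.trans h⟩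
  choose l hl using hex
  -- The edge removed from the circuit of the class `c`.
  let e : Set (List α) → List α := fun c => per (l c) (q + 1)
  -- Such an edge lies on no shorter circuit, and on no other circuit of the same length.
  have hle : ∀ c ∈ C, ∀ v : List α, v ≠ [] → e c = per v (q + 1) →
      (l c).length ≤ v.length := fun c hc v hv h =>
    (hl c hc).1.le_length (hl c hc).2.1 hv (by have := (hl c hc).2.2.1; omega) h
  have heq : ∀ c ∈ C, ∀ v : List α, v ≠ [] → e c = per v (q + 1) →
      (l c).length = v.length → l c = v := fun c hc v hv h hlen =>
    eq_of_per_eq (hl c hc).2.1 hv (by have := (hl c hc).2.2.1; omega) hlen h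
  have hclass : ∀ c ∈ C, ∀ d ∈ C, l c ~r l d → c = d := by
    intro c hc d hd h
    rw [(hl c hc).2.2.2.2, (hl d hd).2.2.2.2]
    ext v
    exact ⟨fun h' => h.symm.trans h', fun h' => h.trans h'⟩
  have hinj : Set.InjOn e C := by
    intro c hc d hd h
    refine hclass c hc d hd ?_
    rw [heq c hc _ (hl d hd).2.1 h
      ((hle c hc _ (hl d hd).2.1 h).antisymm (hle d hd _ (hl c hc).2.1 h.symm))]
  have hsub : e '' C ⊆ E := by
    rintro _ ⟨c, hc, rfl⟩
    exact (hl c hc).2.2.2.1 _ (List.IsRotated.refl _)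
  have hcard : C.ncard = (e '' C).ncard := hinj.ncard_image.symm
  have hdiff := Set.ncard_sdiff_add_ncard_of_subset hsub hEfin
  have hmain : S.ncard ≤ (E \ e '' C).ncard + 1 := by
    refine ncard_le_of_connected S (E \ e '' C) hSfin (hEfin.subset Set.sdiff_subset)
      ⟨w.take q, by simp; omega, (List.take_prefix _ _).isInfix⟩
      (fun x => x.take q) (fun x => x.drop 1) ?_ ?_
    · rintro x ⟨⟨hx, hxw⟩, -⟩
      exact ⟨⟨by simp [hx], (List.take_prefix _ _).isInfix.trans hxw⟩,
        ⟨by simp [hx], (List.drop_suffix _ _).isInfix.trans hxw⟩⟩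
    intro r hr hedge
    -- The endpoints of a removed edge are joined by the rest of its circuit, whose removed
    -- edges all belong to strictly shorter circuits.
    have hrem : ∀ N : ℕ, ∀ c ∈ C, (l c).length = N → r ((e c).take q) ((e c).drop 1) := by
      intro N
      induction N using Nat.strong_induction_on with
      | _ N ih =>
        intro c hc hN
        obtain ⟨hub, hl0, hlq, hlE, -⟩ := hl c hc
        have hpos := List.length_pos_iff.2 hl0
        have hrot0 : ∀ i, (l c).rotate i ≠ [] := fun i h => hl0 (List.rotate_eq_nil_iff.1 h)
        have hchain : ∀ i, 1 ≤ i → i ≤ N →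
            r (per ((l c).rotate 1) q) (per ((l c).rotate i) q) := by
          intro i hi
          induction i, hi using Nat.le_induction with
          | base => exact fun _ => hr.refl _
          | succ i hi ihi =>
            intro hiN
            refine hr.trans (ihi (by omega)) ?_
            have hstep : r ((per ((l c).rotate i) (q + 1)).take q)
                ((per ((l c).rotate i) (q + 1)).drop 1) := by
              by_cases hx : per ((l c).rotate i) (q + 1) ∈ e '' C
              · obtain ⟨d, hd, hdx⟩ := hx
                have hdl := hle d hd _ (hrot0 i) hdx
                rw [List.length_rotate] at hdl
                rw [← hdx]
                refine ih _ (lt_of_le_of_ne (hN ▸ hdl) fun hdN => ?_) d hd rfl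
                have h1 := heq d hd _ (hrot0 i) hdx (by simp; omega)
                have h2 : c = d := hclass c hc d hd ⟨i, h1.symm⟩
                subst h2
                exact hub.rotate_ne (by omega) (by omega) h1.symm
              · exact hedge _ ⟨hlE _ ⟨i, rfl⟩, hx⟩
            rwa [take_per (hrot0 i) (Nat.le_succ q), per_tail (hrot0 i),
              List.rotate_rotate] at hstep
        have hfin := hchain N (by omega) le_rfl
        rw [← hN, List.rotate_length] at hfin
        change r ((per (l c) (q + 1)).take q) ((per (l c) (q + 1)).drop 1)
        rw [take_per hl0 (Nat.le_succ q), per_tail hl0]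
        exact hr.symm hfin
    have hall : ∀ x ∈ E, r (x.take q) (x.drop 1) := by
      intro x hx
      by_cases hxe : x ∈ e '' C
      · obtain ⟨c, hc, rfl⟩ := hxe
        exact hrem _ c hc rfl
      · exact hedge x ⟨hx, hxe⟩
    have hwalk : ∀ i, i + q ≤ w.length → r (w.take q) ((w.drop i).take q) := by
      intro i
      induction i with
      | zero => exact fun _ => by simpa using hr.refl _
      | succ i ih =>
        intro hi
        refine hr.trans (ih (by omega)) ?_
        have h := hall ((w.drop i).take (q + 1)) ⟨by simp; omega,
          (List.take_prefix _ _).isInfix.trans (List.drop_suffix _ _).isInfix⟩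
        rwa [List.take_take, min_eq_left (Nat.le_succ q), List.drop_take, List.drop_drop,
          Nat.add_sub_cancel] at h
    have hstart : ∀ a ∈ S, r (w.take q) a := by
      rintro a ⟨ha, x, y, rfl⟩
      have h := hwalk x.length (by simp; omega)
      rwa [List.append_assoc, List.drop_left, List.take_left' ha, ← List.append_assoc] at h
    exact fun a ha b hb => hr.trans (hr.symm (hstart a ha)) (hstart b hb)
  omega
end

section
/- Let w be a finite word of length n and set N = n+1. Let u_1, …, u_t be pairwise non-conjugate primitive words such that u_i² is a factor of w for each i, with ℓ_i = |u_i| and active interval I_i = {q : SC_w(u_i,q) holds}. Then for every j with 1 ≤ j ≤ t, Σ_{i=1}^t |I_i ∩ I_j| ≤ N − 2ℓ_j. -/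
/-! ### Windows of sequences -/

/-- The word `x s, x (s+1), …, x (s+m-1)` read from the sequence `x`. -/
def win {α : Type*} (x : ℕ → α) (s m : ℕ) : List α :=
  (List.range m).map fun k => x (s + k)

/-- The infinite periodic word `u^ω`, as a sequence. -/
def cyc {α : Type*} (u : List α) (hu : 0 < u.length) (k : ℕ) : α :=
  u[k % u.length]'(Nat.mod_lt _ hu)

section Windows

variable {α : Type*}

@[simp] lemma win_length (x : ℕ → α) (s m : ℕ) : (win x s m).length = m := by
  simp [win]

lemma win_add (x : ℕ → α) (s a b : ℕ) : win x s (a + b) = win x s a ++ win x (s + a) b := by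
  simp [win, List.range_add, List.map_append, Function.comp_def, add_assoc]

lemma win_eq_iff (x y : ℕ → α) (s t m : ℕ) :
    win x s m = win y t m ↔ ∀ k < m, x (s + k) = y (t + k) := by
  simp [win]

lemma win_infix (x : ℕ → α) {s m M : ℕ} (h : s + m ≤ M) : win x s m <:+: win x 0 M := by
  obtain ⟨c, rfl⟩ := Nat.exists_eq_add_of_le h
  refine ⟨win x 0 s, win x (0 + (s + m)) c, ?_⟩
  rw [win_add, win_add]
  simp

lemma win_take (x : ℕ → α) (s m : ℕ) : (win x s (m + 1)).take m = win x s m := by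
  rw [win_add, List.take_left' (win_length x s m)]

lemma win_drop (x : ℕ → α) (s m : ℕ) : (win x s (m + 1)).drop 1 = win x (s + 1) m := by
  rw [add_comm m, win_add, List.drop_left' (win_length x s 1)]

lemma cyc_add_length (u : List α) (hu : 0 < u.length) (k : ℕ) :
    cyc u hu (k + u.length) = cyc u hu k := by
  simp [cyc]

lemma cyc_add_mul (u : List α) (hu : 0 < u.length) (k c : ℕ) :
    cyc u hu (k + c * u.length) = cyc u hu k := by
  simp [cyc]

lemma win_cyc_rotate (u : List α) (hu : 0 < u.length) (s : ℕ) :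
    win (cyc u hu) s u.length = u.rotate s := by
  apply List.ext_getElem
  · simp
  · intro k h1 h2
    simp [win, cyc, List.getElem_rotate, add_comm]

lemma win_cyc_mod (u : List α) (hu : 0 < u.length) (s m : ℕ) :
    win (cyc u hu) (s % u.length) m = win (cyc u hu) s m := by
  rw [win_eq_iff]
  intro k _
  simp [cyc]

lemma win_mul_eq_wpow (x : ℕ → α) (g : ℕ) (hg : ∀ k, x (k + g) = x k) (c : ℕ) :
    win x 0 (c * g) = wpow (win x 0 g) c := by
  induction c with
  | zero => simp [win, wpow]
  | succ c ih =>
    rw [wpow, ← ih, Nat.succ_mul, add_comm, win_add, List.append_cancel_left_eq, win_eq_iff]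
    intro k _
    rw [← hg (0 + k)]
    congr 1; omega

lemma win_cyc_zero (u : List α) (hu : 0 < u.length) : win (cyc u hu) 0 u.length = u := by
  rw [win_cyc_rotate]; simp

lemma win_mem_perFac (u : List α) (hu : 0 < u.length) (s m : ℕ) :
    win (cyc u hu) s m ∈ PerFac u m := by
  refine ⟨win_length _ _ _, ?_⟩
  have h := win_mul_eq_wpow (cyc u hu) u.length (cyc_add_length u hu) (m + 1)
  rw [win_cyc_zero] at h
  rw [← h, ← win_cyc_mod]
  apply win_infix
  have := Nat.mod_lt s hu
  nlinarith

/-- Distinct rotations of a primitive word differ, also when extended periodically. -/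
lemma win_cyc_ne (u : List α) (hu : 0 < u.length) (hp : Primitive u) {s d m : ℕ}
    (hd : 0 < d) (hdl : d < u.length) (hm : u.length ≤ m) :
    win (cyc u hu) s m ≠ win (cyc u hu) (s + d) m := by
  intro h
  rw [win_eq_iff] at h
  -- The equality of windows of length at least `|u|` makes `d` a period of the sequence.
  have hper : ∀ k, cyc u hu (k + d) = cyc u hu k := by
    intro k
    -- `k` is congruent modulo `|u|` to `s + i` with `i < |u|`.
    set i := (k + s * u.length - s) % u.length with hi
    have hsl : s ≤ s * u.length := Nat.le_mul_of_pos_right s hu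
    have hmod := Nat.mod_add_div (k + s * u.length - s) u.length
    have key : s + i + ((k + s * u.length - s) / u.length) * u.length = k + s * u.length := by
      rw [mul_comm u.length] at hmod
      omega
    have h1 := h i (lt_of_lt_of_le (Nat.mod_lt _ hu) hm)
    rw [← cyc_add_mul u hu k s, ← key, cyc_add_mul, h1, ← cyc_add_mul u hu (k + d) s,
      ← cyc_add_mul u hu (s + d + i) ((k + s * u.length - s) / u.length)]
    congr 1
    omega
  have hperm : ∀ c k, cyc u hu (k + d * c) = cyc u hu k := by
    intro c
    induction c with
    | zero => simp
    | succ c ih =>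
      intro k
      rw [Nat.mul_succ, ← add_assoc, hper, ih]
  have hg0 : 0 < Nat.gcd d u.length := Nat.gcd_pos_of_pos_left _ hd
  have hgl : Nat.gcd d u.length < u.length :=
    lt_of_le_of_lt (Nat.le_of_dvd hd (Nat.gcd_dvd_left _ _)) hdl
  obtain ⟨c, hc⟩ := Nat.exists_mul_mod_eq_gcd hgl
  have hgper : ∀ k, cyc u hu (k + Nat.gcd d u.length) = cyc u hu k := by
    intro k
    rw [← hperm c k, ← hc.2]
    simp [cyc]
  obtain ⟨e, he⟩ := Nat.gcd_dvd_right d u.length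
  have h2 := win_mul_eq_wpow (cyc u hu) _ hgper e
  rw [mul_comm, ← he, win_cyc_zero] at h2
  refine hp.2 _ e ?_ h2
  by_contra hlt
  have : e = 0 ∨ e = 1 := by omega
  rcases this with rfl | rfl <;> omega

lemma conj_of_win_eq (u v : List α) (hu : 0 < u.length) (hv : 0 < v.length)
    (hl : u.length = v.length) {s t m : ℕ} (hm : u.length ≤ m)
    (h : win (cyc u hu) s m = win (cyc v hv) t m) : Conj u v := by
  have h1 : win (cyc u hu) s u.length = win (cyc v hv) t v.length := by
    rw [← hl]
    rw [win_eq_iff] at h ⊢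
    exact fun k hk => h k (by omega)
  rw [win_cyc_rotate, win_cyc_rotate] at h1
  have h2 : u ~r v := (List.IsRotated.forall u s).symm.trans (h1 ▸ List.IsRotated.forall v t)
  obtain ⟨c, rfl⟩ := h2
  exact ⟨u.take (c % u.length), u.drop (c % u.length), (List.take_append_drop _ _).symm,
    List.rotate_eq_drop_append_take_mod⟩

end Windows

/-! ### Least windows -/

section LeastWindows

variable {α : Type*} [LinearOrder α]

lemma append_lt_append_of_lt {a b c d : List α} (hl : a.length = b.length) (h : a < b) :
    a ++ c < b ++ d := by
  induction a generalizing b with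
  | nil => cases b <;> simp_all
  | cons x a ih =>
    cases b with
    | nil => simp at hl
    | cons y b =>
      rw [List.cons_append, List.cons_append, List.cons_lt_cons_iff]
      rw [List.cons_lt_cons_iff] at h
      rcases h with h | ⟨rfl, h⟩
      · exact Or.inl h
      · exact Or.inr ⟨rfl, ih (by simpa using hl) h⟩

lemma append_lt_append_left' {a b c : List α} (h : b < c) : a ++ b < a ++ c := by
  induction a with
  | nil => simpa
  | cons x a ih =>
    rw [List.cons_append, List.cons_append, List.cons_lt_cons_iff]
    exact Or.inr ⟨rfl, ih⟩

/-- If the window of `y` at `0` is least among all windows of `y`, `y` has period `r`, and `y`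
starts like a sequence of period `p < r`, then the window at `0` reappears at a position strictly
between `0` and `r`. This is the unborderedness of Lyndon words. -/
lemma window_reappears (x y : ℕ → α) {p r m : ℕ} (hp : 0 < p) (hpr : p < r) (hrm : r ≤ m)
    (hx : ∀ k c, x (k + p * c) = x k) (hy : ∀ k, y (k + r) = y k)
    (hxy : win x 0 m = win y 0 m) (hmin : ∀ s, win y 0 m ≤ win y s m) :
    ∃ d, 0 < d ∧ d < r ∧ win y 0 m = win y d m := by
  rw [win_eq_iff] at hxy
  -- The prefix of length `r` has a border of length `s`, where `r ≡ s` modulo `p`, `1 ≤ s ≤ p`.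
  obtain ⟨s, c, hs0, hsp, hrs⟩ : ∃ s c, 0 < s ∧ s ≤ p ∧ r = p * c + s := by
    refine ⟨(r - 1) % p + 1, (r - 1) / p, by omega, Nat.mod_lt _ hp, ?_⟩
    have := Nat.div_add_mod (r - 1) p
    omega
  have hborder : win y (p * c) s = win y 0 s := by
    rw [win_eq_iff]
    intro k hk
    have h1 := hxy (p * c + k) (by omega)
    have h2 := hxy k (by omega)
    have h3 := hx k c
    rw [zero_add] at h1 h2 ⊢
    rw [← h1, ← h2, ← h3, add_comm]
  obtain ⟨b, rfl⟩ : ∃ b, m = s + b := ⟨m - s, by omega⟩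
  have hwrap : win y (p * c + s) b = win y 0 b := by
    rw [win_eq_iff]
    intro k _
    rw [← hrs, add_comm r k, hy, zero_add]
  have e1 : win y 0 (s + b) = win y 0 s ++ win y s b := by rw [win_add, zero_add]
  have e2 : win y (p * c) (s + b) = win y 0 s ++ win y 0 b := by
    rw [win_add, hborder, hwrap]
  refine ⟨p * c, by omega, by omega, ?_⟩
  rw [e1, e2]
  rcases lt_trichotomy (win y s b) (win y 0 b) with h | h | h
  · exfalso
    have h1 := hmin s
    rw [add_comm s b, win_add, win_add] at h1
    exact absurd (append_lt_append_of_lt (by simp) h) (not_lt.mpr h1)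
  · rw [h]
  · exfalso
    have h1 := hmin (p * c)
    rw [e1, e2] at h1
    exact absurd (append_lt_append_left' h) (not_lt.mpr h1)

lemma least_window_length_le (u v : List α) (hu : 0 < u.length) (hv : 0 < v.length)
    (hpv : Primitive v) {s t m : ℕ} (hvm : v.length ≤ m)
    (heq : win (cyc u hu) s m = win (cyc v hv) t m)
    (hmin : ∀ k, win (cyc v hv) t m ≤ win (cyc v hv) k m) : v.length ≤ u.length := by
  by_contra! hlt
  have hsh : ∀ k, win (fun i => cyc v hv (t + i)) k m = win (cyc v hv) (t + k) m := by
    intro k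
    rw [win_eq_iff]
    intro i _
    simp only [add_assoc]
  obtain ⟨d, hd0, hdr, hd⟩ := window_reappears (fun i => cyc u hu (s + i))
    (fun i => cyc v hv (t + i)) (p := u.length) (r := v.length) (m := m) hu hlt hvm
    (fun k c => by
      show cyc u hu (s + (k + u.length * c)) = _
      rw [← add_assoc, mul_comm, cyc_add_mul])
    (fun k => by
      show cyc v hv (t + (k + v.length)) = _
      rw [← add_assoc, cyc_add_length])
    (by
      rw [hsh, add_zero, ← heq, win_eq_iff]
      intro i _
      simp)
    (fun k => by rw [hsh, hsh]; exact hmin _)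
  rw [hsh, hsh, add_zero] at hd
  exact win_cyc_ne v hv hpv hd0 hdr hvm hd

/-- Two primitive words sharing their least window of length `m` are conjugate, when `m` is at
least their lengths. -/
lemma least_window_unique (u v : List α) (hu : 0 < u.length) (hv : 0 < v.length)
    (hpu : Primitive u) (hpv : Primitive v) {s t m : ℕ} (hum : u.length ≤ m) (hvm : v.length ≤ m)
    (heq : win (cyc u hu) s m = win (cyc v hv) t m)
    (hminu : ∀ k, win (cyc u hu) s m ≤ win (cyc u hu) k m)
    (hminv : ∀ k, win (cyc v hv) t m ≤ win (cyc v hv) k m) : Conj u v :=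
  conj_of_win_eq u v hu hv
    (le_antisymm (least_window_length_le v u hv hu hpu hum heq.symm hminu)
      (least_window_length_le u v hu hv hpv hvm heq hminv)) hum heq

lemma exists_least_window (u : List α) (hu : 0 < u.length) (m : ℕ) :
    ∃ s < u.length, ∀ k, win (cyc u hu) s m ≤ win (cyc u hu) k m := by
  obtain ⟨s, hs, hmin⟩ := Finset.exists_min_image (Finset.range u.length)
    (fun s => win (cyc u hu) s m) ⟨0, by simpa using hu⟩
  refine ⟨s, by simpa using hs, fun k => ?_⟩
  rw [← win_cyc_mod u hu k]
  exact hmin _ (by simpa using Nat.mod_lt k hu)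

end LeastWindows

/-! ### Closed walks in a directed graph -/

/-- A directed multigraph with a walk through all vertices, and a family of closed walks whose
least edges `e i` are pairwise distinct: the family has at most `|E| - |V| + 1` members. -/
lemma card_vertices_add_card_le {V E ι : Type*} [Fintype V] [Fintype E] [LinearOrder E]
    (src tgt : E → V) (A : Finset ι) (e : ι → E) (hinj : Set.InjOn e A)
    (hcyc : ∀ i ∈ A, ∃ (l : ℕ) (c : ℕ → E), (∀ k, tgt (c k) = src (c (k + 1))) ∧ c l = c 0 ∧
      (∃ k < l, c k = e i) ∧ ∀ k, e i ≤ c k)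
    (p : ℕ → V) (m : ℕ) (hp : ∀ v, ∃ k ≤ m, p k = v)
    (hstep : ∀ k < m, ∃ a, src a = p k ∧ tgt a = p (k + 1)) :
    Fintype.card V + A.card ≤ Fintype.card E + 1 := by
  classical
  -- Evaluation at `p 0` together with the increments along unmarked edges.
  let B := {b : E // b ∉ A.image e}
  let T : (V → ℚ) →ₗ[ℚ] (Option B → ℚ) :=
    { toFun := fun f o => o.elim (f (p 0)) fun b => f (tgt b.1) - f (src b.1)
      map_add' := by
        intro f g
        ext o
        rcases o with _ | b
        · rfl
        · simp only [Option.elim_some, Pi.add_apply]; ring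
      map_smul' := by
        intro a f
        ext o
        rcases o with _ | b
        · rfl
        · simp only [Option.elim_some, Pi.smul_apply, RingHom.id_apply, smul_eq_mul]; ring }
  have hT : Function.Injective T := by
    rw [← LinearMap.ker_eq_bot, LinearMap.ker_eq_bot']
    intro f hf
    have h0 : f (p 0) = 0 := congrFun hf none
    have hB : ∀ b, b ∉ A.image e → f (tgt b) - f (src b) = 0 := fun b hb =>
      congrFun hf (some ⟨b, hb⟩)
    have hE : ∀ b, f (tgt b) - f (src b) = 0 := by
      by_contra! hne
      obtain ⟨b₀, hb₀⟩ := hne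
      obtain ⟨b, hb, hmax⟩ := Finset.exists_max_image
        (Finset.univ.filter fun b => f (tgt b) - f (src b) ≠ 0) id ⟨b₀, by simpa using hb₀⟩
      simp only [Finset.mem_filter, Finset.mem_univ, true_and, id] at hb hmax
      have hbe : b ∈ A.image e := by
        by_contra h
        exact hb (hB b h)
      obtain ⟨i, hi, rfl⟩ := Finset.mem_image.mp hbe
      obtain ⟨l, c, hc, hcl, ⟨k₀, hk₀, hck₀⟩, hle⟩ := hcyc i hi
      have hsum : ∑ k ∈ Finset.range l, (f (tgt (c k)) - f (src (c k))) = 0 := by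
        simp_rw [hc]
        rw [Finset.sum_range_sub (fun k => f (src (c k))), hcl, sub_self]
      have hterm : ∀ k ∈ Finset.range l, f (tgt (c k)) - f (src (c k)) =
          if c k = e i then f (tgt (e i)) - f (src (e i)) else 0 := by
        intro k _
        split_ifs with h
        · rw [h]
        · by_contra hk
          exact h (le_antisymm (hmax _ hk) (hle k))
      rw [Finset.sum_congr rfl hterm, ← Finset.sum_filter, Finset.sum_const, nsmul_eq_mul] at hsum
      rcases mul_eq_zero.mp hsum with h | h
      · have h' : (Finset.range l).filter (fun k => c k = e i) = ∅ := by
          simpa using h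
        have : k₀ ∈ (Finset.range l).filter (fun k => c k = e i) := by simp [hk₀, hck₀]
        rw [h'] at this
        simp at this
      · exact hb h
    have hpath : ∀ k ≤ m, f (p k) = 0 := by
      intro k
      induction k with
      | zero => intro _; exact h0
      | succ k ih =>
        intro hk
        obtain ⟨a, ha1, ha2⟩ := hstep k hk
        have := hE a
        rw [ha1, ha2, ih (by omega)] at this
        linarith
    ext v
    obtain ⟨k, hk, rfl⟩ := hp v
    exact hpath k hk
  have h := LinearMap.finrank_le_finrank_of_injective hT
  simp only [Module.finrank_fintype_fun_eq_card, Fintype.card_option] at h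
  have hB : Fintype.card B = Fintype.card E - A.card := by
    have h1 := Fintype.card_subtype_compl (fun b => b ∈ A.image e)
    rw [Fintype.card_coe, Finset.card_image_of_injOn hinj] at h1
    exact h1
  have hA : A.card ≤ Fintype.card E := by
    rw [← Finset.card_image_of_injOn hinj]
    exact Finset.card_le_univ _
  omega

/-! ### The Rauzy graph of a word -/

open Classical in
/-- The finite set of length-`q` factors of `w`, listed by starting position; for `q > |w|` the
truncated subtraction makes it empty, as it should be. -/
noncomputable def facs {α : Type*} (w : List α) (q : ℕ) : Finset (List α) :=
  (Finset.range (w.length + 1 - q)).image fun k => (w.drop k).take q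

lemma mem_facs_iff_exists {α : Type*} {w v : List α} {q : ℕ} :
    v ∈ facs w q ↔ ∃ k < w.length + 1 - q, (w.drop k).take q = v := by
  classical
  unfold facs
  rw [Finset.mem_image]
  simp only [Finset.mem_range]

lemma mem_facs {α : Type*} {w v : List α} {q : ℕ} :
    v ∈ facs w q ↔ v <:+: w ∧ v.length = q := by
  rw [mem_facs_iff_exists]
  constructor
  · rintro ⟨k, hk, rfl⟩
    refine ⟨(List.take_prefix _ _).isInfix.trans (List.drop_suffix _ _).isInfix, ?_⟩
    simp; omega
  · rintro ⟨⟨a, b, rfl⟩, rfl⟩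
    refine ⟨a.length, by simp; omega, by simp⟩

lemma card_facs_length {α : Type*} (w : List α) : (facs w w.length).card ≤ 1 := by
  classical
  refine Finset.card_image_le.trans ?_
  simp

lemma length_le_card_facs {α : Type*} (w u : List α) (hp : Primitive u) (hsq : u ++ u <:+: w) :
    u.length ≤ (facs w u.length).card := by
  classical
  have hu : 0 < u.length := List.length_pos_iff.mpr hp.1
  have huu : win (cyc u hu) 0 (u.length + u.length) = u ++ u := by
    rw [win_add, win_cyc_zero, zero_add, win_cyc_rotate, List.rotate_length]
  rw [← huu] at hsq
  calc u.length = ((Finset.range u.length).image fun s => win (cyc u hu) s u.length).card := by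
        rw [Finset.card_image_of_injOn, Finset.card_range]
        intro a ha b hb hab
        simp only [Finset.coe_range, Set.mem_Iio] at ha hb
        simp only at hab
        by_contra hne
        rcases Nat.lt_or_gt_of_ne hne with h | h
        · apply win_cyc_ne u hu hp (s := a) (d := b - a) (by omega) (by omega) le_rfl
          rw [hab]; congr 1; omega
        · apply win_cyc_ne u hu hp (s := b) (d := a - b) (by omega) (by omega) le_rfl
          rw [← hab]; congr 1; omega
    _ ≤ _ := by
        apply Finset.card_le_card
        intro v hv
        obtain ⟨s, hs, rfl⟩ := Finset.mem_image.mp hv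
        have hs' : s < u.length := by simpa using hs
        exact mem_facs.mpr ⟨(win_infix _ (by omega)).trans hsq, win_length _ _ _⟩

/-- At each level `q`, the number of active words is at most the cyclomatic number of the
Rauzy graph. -/
lemma card_active_le {α : Type*} (w : List α) {t : ℕ} (u : Fin t → List α)
    (hprim : ∀ i, Primitive (u i)) (hnc : ∀ i j, i ≠ j → ¬ Conj (u i) (u j))
    {q : ℕ} (hq : q < w.length) (A : Finset (Fin t)) (hA : ∀ i ∈ A, SC w (u i) q) :
    (facs w q).card + A.card ≤ (facs w (q + 1)).card + 1 := by
  classical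
  let _ : LinearOrder α := linearOrderOfSTO WellOrderingRel
  have hu : ∀ i, 0 < (u i).length := fun i => List.length_pos_iff.mpr (hprim i).1
  have hmem : ∀ i ∈ A, ∀ s, win (cyc (u i) (hu i)) s (q + 1) ∈ facs w (q + 1) := fun i hi s =>
    mem_facs.mpr ⟨(hA i hi).2.2 (win_mem_perFac _ _ _ _), win_length _ _ _⟩
  choose s hs hmin using fun i => exists_least_window (u i) (hu i) (q + 1)
  have hpath : ∀ k (r : ℕ), k + r ≤ w.length → (w.drop k).take r ∈ facs w r := by
    intro k r hk
    exact mem_facs_iff_exists.mpr ⟨k, by omega, rfl⟩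
  have hne : (w.drop 0).take (q + 1) ∈ facs w (q + 1) := hpath 0 (q + 1) (by omega)
  have hsrc : ∀ a ∈ facs w (q + 1), a.take q ∈ facs w q := by
    intro a ha
    rw [mem_facs] at ha ⊢
    exact ⟨(List.take_prefix _ _).isInfix.trans ha.1, by simp; omega⟩
  have htgt : ∀ a ∈ facs w (q + 1), a.drop 1 ∈ facs w q := by
    intro a ha
    rw [mem_facs] at ha ⊢
    exact ⟨(List.drop_suffix _ _).isInfix.trans ha.1, by simp; omega⟩
  have key := card_vertices_add_card_le (V := facs w q) (E := facs w (q + 1))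
    (fun a => ⟨a.1.take q, hsrc _ a.2⟩) (fun a => ⟨a.1.drop 1, htgt _ a.2⟩) A
    (fun i => if h : i ∈ A then ⟨win (cyc (u i) (hu i)) (s i) (q + 1), hmem i h _⟩ else ⟨_, hne⟩)
    (by
      intro i hi i' hi' h
      have hi : i ∈ A := hi
      have hi' : i' ∈ A := hi'
      simp only [hi, hi', dite_true, Subtype.mk.injEq] at h
      by_contra hii
      exact hnc i i' hii (least_window_unique _ _ _ _ (hprim i) (hprim i')
        ((hA i hi).1.trans (Nat.le_succ q)) ((hA i' hi').1.trans (Nat.le_succ q)) h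
        (hmin i) (hmin i')))
    (by
      intro i hi
      refine ⟨(u i).length, fun k => ⟨win (cyc (u i) (hu i)) k (q + 1), hmem i hi k⟩, ?_, ?_, ?_, ?_⟩
      · intro k
        simp only [win_take, win_drop]
      · apply Subtype.ext
        show win _ _ _ = win _ _ _
        rw [← win_cyc_mod, Nat.mod_self]
      · exact ⟨s i, hs i, by simp only [hi, dite_true]⟩
      · intro k
        simp only [hi, dite_true]
        exact hmin i k)
    -- Position `|w| - q` is the last one; `min` only makes the walk a total function.
    (fun k => ⟨(w.drop (min k (w.length - q))).take q, hpath _ _ (by omega)⟩) (w.length - q)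
    (by
      rintro ⟨v, hv⟩
      obtain ⟨k, hk, rfl⟩ := mem_facs_iff_exists.mp hv
      refine ⟨k, by omega, ?_⟩
      apply Subtype.ext
      show (w.drop (min k (w.length - q))).take q = _
      rw [min_eq_left (by omega)])
    (by
      intro k hk
      refine ⟨⟨(w.drop k).take (q + 1), hpath _ _ (by omega)⟩, ?_, ?_⟩
      · apply Subtype.ext
        show ((w.drop k).take (q + 1)).take q = (w.drop (min k (w.length - q))).take q
        rw [min_eq_left (by omega), List.take_take, min_eq_left (by omega)]
      · apply Subtype.ext
        show ((w.drop k).take (q + 1)).drop 1 = (w.drop (min (k + 1) (w.length - q))).take q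
        rw [min_eq_left (by omega), List.drop_take, List.drop_drop]
        simp)
  simpa using key

lemma SC.lt_length {α : Type*} {w u : List α} {q : ℕ} (hu : 0 < u.length) (h : SC w u q) :
    q < w.length := by
  have h1 : win (cyc u hu) 0 (q + 1) <:+: w := h.2.2 (win_mem_perFac u hu 0 (q + 1))
  simpa using h1.length_le

/-- For every `j`, `Σ_{i=1}^t |I_i ∩ I_j| ≤ N - 2ℓ_j`, where
`I_i = {q : SC_w(u_i, q)}` and `N = n + 1`. -/
theorem stmt_8 {α : Type*} (w : List α) (n N t : ℕ)
    (hn : w.length = n) (hN : N = n + 1)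
    (u : Fin t → List α)
    (hprim : ∀ i, Primitive (u i))
    (hsq : ∀ i, (u i ++ u i) <:+: w)
    (hnc : ∀ i j, i ≠ j → ¬ Conj (u i) (u j))
    (j : Fin t) :
    (∑ i : Fin t,
        (Set.ncard ({q : ℕ | SC w (u i) q} ∩ {q : ℕ | SC w (u j) q}) : ℤ)) ≤
      (N : ℤ) - 2 * (u j).length := by
  classical
  subst hn hN
  have hu : ∀ i, 0 < (u i).length := fun i => List.length_pos_iff.mpr (hprim i).1
  set l := (u j).length with hl
  have hln : l ≤ w.length := by
    have := (hsq j).length_le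
    simp only [List.length_append] at this
    omega
  have h1 : ∀ i, Set.ncard ({q : ℕ | SC w (u i) q} ∩ {q : ℕ | SC w (u j) q}) ≤
      ((Finset.Ico l w.length).filter fun q => SC w (u i) q).card := by
    intro i
    rw [← Set.ncard_coe_finset]
    apply Set.ncard_le_ncard _ (Finset.finite_toSet _)
    rintro q ⟨hi, hj⟩
    simp only [Finset.coe_filter, Finset.mem_Ico, Set.mem_ofPred_eq]
    exact ⟨⟨hj.1, SC.lt_length (hu j) hj⟩, hi⟩
  have h2 : ∑ i, Set.ncard ({q : ℕ | SC w (u i) q} ∩ {q : ℕ | SC w (u j) q}) ≤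
      ∑ q ∈ Finset.Ico l w.length, (Finset.univ.filter fun i => SC w (u i) q).card := by
    refine (Finset.sum_le_sum fun i _ => h1 i).trans (le_of_eq ?_)
    simp only [Finset.card_filter]
    exact Finset.sum_comm
  have h3 : ∀ m, l ≤ m → m ≤ w.length →
      ∑ q ∈ Finset.Ico l m, (Finset.univ.filter fun i => SC w (u i) q).card + (facs w l).card
        + l ≤ (facs w m).card + m := by
    intro m hm
    induction m, hm using Nat.le_induction with
    | base => simp
    | succ m hm ih =>
      intro hmw
      have hlev := card_active_le w u hprim hnc (q := m) (by omega)
        (Finset.univ.filter fun i => SC w (u i) m) (by simp)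
      rw [Finset.sum_Ico_succ_top hm]
      have := ih (by omega)
      omega
  have h4 := h3 w.length hln le_rfl
  have h5 := card_facs_length w
  have h6 := length_le_card_facs w (u j) (hprim j) (hsq j)
  rw [← hl] at h6
  have h7 : ∑ i, Set.ncard ({q : ℕ | SC w (u i) q} ∩ {q : ℕ | SC w (u j) q}) + 2 * l
      ≤ w.length + 1 := by omega
  zify at h7
  push_cast
  linarith
end
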